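/- arXiv:1506.02223 — 7 statements merged into one kernel-verified Lean document; each statement's English description precedes it below -/
import Mathlib

section
/- Let m ≥ 1, let f : ℝ → ℝ and g : ℝ → ℝ satisfy f(g(s)) = s on an interval J, let ε : ℝ² → ℝ (a function of (x,y) only) and δ : ℝ^{2+m} → ℝ^m. Define the toy model map F(x,y,z) = (f(x) − ε(x,y), x, δ(x,y,z)) and H(x,y,z) = (f(x) − ε(x,y), y, z − δ(y, g(y), 0)), and the two-dimensional maps F₂(x,y) = (f(x) − ε(x,y), x) and H₂(x,y) = (f(x) − ε(x,y), y). Let G(x,y,z) = (φ(x,y,z), y, z + δ(y, g(y), 0)) satisfy H(G(w)) = w for all w ∈ U, and suppose that for each y the map s ↦ f(s) − ε(s,y) is injective on the set {φ(x,y,z) : (x,y,z) ∈ U}. Then: (i) φ(x,y,z) depends only on (x,y), i.e. there is φ₂ with φ(x,y,z) = φ₂(x,y) on U; (ii) setting G₂(x,y) = (φ₂(x,y), y), one has H₂(G₂(x,y)) = (x,y) and π_{xy}(H(F(F(G(x,y,z))))) = H₂(F₂(F₂(G₂(x,y)))) for all (x,y,z) ∈ U. In particular the first coordinate of H∘F²∘G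 is independent of z, so the pre-renormalization of a toy model map is again a toy model map and its (x,y)-projection is the two-dimensional pre-renormalization. -/
/-!
Comparing first coordinates in `H (G w) = w` gives `f (φ w) - ε (φ w, y) = x` for `w = (x, y, z)`
in `U`. The right-hand side does not involve `z`, so injectivity of `s ↦ f s - ε (s, y)` forces
`φ w` to depend on `(x, y)` only, which yields `φ₂`, and the same equation is `H₂ ∘ G₂ = id`.
Since `ε` ignores `z`, the maps `F` and `H` are semiconjugate to `F₂` and `H₂` under the projection
to the first two coordinates, and the projection formula follows by unfolding the maps.
-/

/-- the pre-renormalization of a toy model map is again a toy model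
map, and its `(x,y)`-projection is the two-dimensional pre-renormalization. -/
theorem stmt_2 (m : ℕ) (hm : 1 ≤ m)
    (f g : ℝ → ℝ) (J : Set ℝ) (hfg : ∀ s ∈ J, f (g s) = s)
    (ε : ℝ × ℝ → ℝ)
    (δ : ℝ × ℝ × (Fin m → ℝ) → (Fin m → ℝ))
    (F H : ℝ × ℝ × (Fin m → ℝ) → ℝ × ℝ × (Fin m → ℝ))
    (F₂ H₂ : ℝ × ℝ → ℝ × ℝ)
    (G : ℝ × ℝ × (Fin m → ℝ) → ℝ × ℝ × (Fin m → ℝ))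
    (φ : ℝ × ℝ × (Fin m → ℝ) → ℝ)
    (U : Set (ℝ × ℝ × (Fin m → ℝ)))
    (hF : ∀ w, F w = (f w.1 - ε (w.1, w.2.1), w.1, δ w))
    (hH : ∀ w, H w = (f w.1 - ε (w.1, w.2.1), w.2.1, w.2.2 - δ (w.2.1, g w.2.1, 0)))
    (hF₂ : ∀ p : ℝ × ℝ, F₂ p = (f p.1 - ε p, p.1))
    (hH₂ : ∀ p : ℝ × ℝ, H₂ p = (f p.1 - ε p, p.2))
    (hG : ∀ w ∈ U, G w = (φ w, w.2.1, w.2.2 + δ (w.2.1, g w.2.1, 0)))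
    (hHG : ∀ w ∈ U, H (G w) = w)
    (hinj : ∀ y : ℝ, Set.InjOn (fun s => f s - ε (s, y)) (φ '' U)) :
    ∃ φ₂ : ℝ × ℝ → ℝ,
      (∀ w ∈ U, φ w = φ₂ (w.1, w.2.1)) ∧
      (∀ w ∈ U,
        H₂ (φ₂ (w.1, w.2.1), w.2.1) = (w.1, w.2.1) ∧
        ((H (F (F (G w)))).1, (H (F (F (G w)))).2.1) =
          H₂ (F₂ (F₂ (φ₂ (w.1, w.2.1), w.2.1)))) := by
  have key : ∀ w ∈ U, f (φ w) - ε (φ w, w.2.1) = w.1 := by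
    intro w hw
    have h := congrArg Prod.fst (hHG w hw)
    rwa [hG w hw, hH] at h
  have indep : ∀ w ∈ U, ∀ w' ∈ U, w.1 = w'.1 → w.2.1 = w'.2.1 → φ w = φ w' := by
    intro w hw w' hw' h1 h2
    apply hinj w.2.1 ⟨w, hw, rfl⟩ ⟨w', hw', rfl⟩
    change f (φ w) - ε (φ w, w.2.1) = f (φ w') - ε (φ w', w.2.1)
    rw [key w hw, h2, key w' hw', h1]
  classical
  -- `φ₂ p` is the value of `φ` at a chosen point of `U` above `p`, and `0` if there is none.
  let φ₂ : ℝ × ℝ → ℝ := fun p =>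
    if h : ∃ w ∈ U, w.1 = p.1 ∧ w.2.1 = p.2 then φ h.choose else 0
  have hφ : ∀ w ∈ U, φ w = φ₂ (w.1, w.2.1) := by
    intro w hw
    have h : ∃ w' ∈ U, w'.1 = (w.1, w.2.1).1 ∧ w'.2.1 = (w.1, w.2.1).2 := ⟨w, hw, rfl, rfl⟩
    have hc := h.choose_spec
    simp only [φ₂, dif_pos h]
    exact indep w hw _ hc.1 hc.2.1.symm hc.2.2.symm
  refine ⟨φ₂, hφ, fun w hw => ?_⟩
  rw [← hφ w hw]
  refine ⟨by rw [hH₂, key w hw], ?_⟩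
  simp only [hG w hw, hH, hF, hF₂, hH₂]
end

section
/- Let m ≥ 1, let A be an invertible 2×2 real matrix, D an invertible m×m real matrix, B a 2×m and C an m×2 real matrix, and let ρ₀ ∈ (0,1). Suppose ‖A^{−1} B D^{−1} C‖ ≤ ρ₀ and ‖B‖·‖C‖ ≤ ρ₀ · m(A) · m(D), where m(A) = 1/‖A^{−1}‖ and m(D) = 1/‖D^{−1}‖. Then A − B D^{−1} C is invertible and ‖(A − B D^{−1} C)^{−1} B D^{−1}‖ · ‖C‖ ≤ ρ₀/(1 − ρ₀). -/
/-!
Put `X = A⁻¹ B D⁻¹ C`. Since `‖X‖ ≤ ρ₀ < 1`, the operator `1 - X` is invertible (Neumann series),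
and `A - B D⁻¹ C = A (1 - X)` has inverse `E = (1 - X)⁻¹ A⁻¹`. The operator `F = E B D⁻¹` satisfies
the fixed-point equation `F = A⁻¹ B D⁻¹ + X F`, so `(1 - ρ₀) ‖F‖ ≤ ‖A⁻¹‖ ‖B‖ ‖D⁻¹‖`; multiplying
by `‖C‖` and using `‖B‖ ‖C‖ ≤ ρ₀ m(A) m(D)` gives the estimate.
-/

noncomputable section

/-- `ℝ²` with the Euclidean norm. -/
abbrev E2 := EuclideanSpace ℝ (Fin 2)

/-- `ℝᵐ` with the Euclidean norm. -/
abbrev Em (m : ℕ) := EuclideanSpace ℝ (Fin m)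

/-- if `‖A⁻¹ B D⁻¹ C‖ ≤ ρ₀ < 1` and `‖B‖‖C‖ ≤ ρ₀ m(A) m(D)`, then
the Schur complement `A - B D⁻¹ C` is invertible and
`‖(A - B D⁻¹ C)⁻¹ B D⁻¹‖ ⬝ ‖C‖ ≤ ρ₀ / (1 - ρ₀)`. -/
theorem stmt_9 (m : ℕ) (hm : 1 ≤ m) (ρ₀ : ℝ) (hρ₀0 : 0 < ρ₀) (hρ₀1 : ρ₀ < 1)
    (A : E2 ≃L[ℝ] E2) (D : Em m ≃L[ℝ] Em m)
    (B : Em m →L[ℝ] E2) (C : E2 →L[ℝ] Em m)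
    (h1 : ‖((A.symm : E2 →L[ℝ] E2)).comp
        (B.comp (((D.symm : Em m →L[ℝ] Em m)).comp C))‖ ≤ ρ₀)
    (h2 : ‖B‖ * ‖C‖ ≤ ρ₀ * ‖(A.symm : E2 →L[ℝ] E2)‖⁻¹ * ‖(D.symm : Em m →L[ℝ] Em m)‖⁻¹) :
    ∃ E : E2 →L[ℝ] E2,
      ((A : E2 →L[ℝ] E2) - B.comp (((D.symm : Em m →L[ℝ] Em m)).comp C)).comp E =
        ContinuousLinearMap.id ℝ E2 ∧
      E.comp ((A : E2 →L[ℝ] E2) - B.comp (((D.symm : Em m →L[ℝ] Em m)).comp C)) =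
        ContinuousLinearMap.id ℝ E2 ∧
      ‖E.comp (B.comp ((D.symm : Em m →L[ℝ] Em m)))‖ * ‖C‖ ≤ ρ₀ / (1 - ρ₀) := by
  set a : E2 →L[ℝ] E2 := (A.symm : E2 →L[ℝ] E2) with ha
  set d : Em m →L[ℝ] Em m := (D.symm : Em m →L[ℝ] Em m) with hd
  set S : E2 →L[ℝ] E2 := B.comp (d.comp C) with hS
  set X : E2 →L[ℝ] E2 := a.comp S with hX
  obtain ⟨u, hu⟩ : IsUnit (1 - X) := isUnit_one_sub_of_norm_lt_one (h1.trans_lt hρ₀1)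
  set G : E2 →L[ℝ] E2 := ((u⁻¹ : (E2 →L[ℝ] E2)ˣ) : E2 →L[ℝ] E2) with hG
  have hG1 : (1 - X) * G = 1 := by rw [← hu]; exact u.mul_inv
  have hG2 : G * (1 - X) = 1 := by rw [← hu]; exact u.inv_mul
  have haA : a * (A : E2 →L[ℝ] E2) = 1 := by ext1 x; simp [ha]
  have hAa : (A : E2 →L[ℝ] E2) * a = 1 := by ext1 x; simp [ha]
  have hX' : X = a * S := rfl
  have hfac : (A : E2 →L[ℝ] E2) - S = A * (1 - X) := by
    rw [hX', mul_sub, ← mul_assoc, hAa, mul_one, one_mul]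
  refine ⟨G * a, ?_, ?_, ?_⟩
  · change ((A : E2 →L[ℝ] E2) - S) * (G * a) = 1
    rw [hfac, mul_assoc, ← mul_assoc (1 - X), hG1, one_mul, hAa]
  · change (G * a) * ((A : E2 →L[ℝ] E2) - S) = 1
    rw [hfac, mul_assoc, ← mul_assoc a, haA, one_mul, hG2]
  · set F : Em m →L[ℝ] E2 := (G * a).comp (B.comp d) with hF
    have hGX : G = 1 + X * G := by
      rw [sub_mul, one_mul] at hG1
      exact sub_eq_iff_eq_add.mp hG1
    have hFX : F = a.comp (B.comp d) + X.comp F := by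
      have h : F = ((1 + X * G) * a).comp (B.comp d) := by rw [← hGX]
      rw [add_mul, one_mul, ContinuousLinearMap.add_comp] at h
      exact h
    have hN : ‖F‖ ≤ ‖a‖ * (‖B‖ * ‖d‖) + ρ₀ * ‖F‖ := by
      calc ‖F‖ = ‖a.comp (B.comp d) + X.comp F‖ := congrArg _ hFX
        _ ≤ ‖a.comp (B.comp d)‖ + ‖X.comp F‖ := norm_add_le _ _
        _ ≤ ‖a‖ * (‖B‖ * ‖d‖) + ρ₀ * ‖F‖ := by
          gcongr
          · exact (a.opNorm_comp_le _).trans (by gcongr; exact B.opNorm_comp_le d)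
          · exact (X.opNorm_comp_le F).trans (by gcongr)
    -- Only `≤` is needed here, so a vanishing norm (with `0⁻¹ = 0`) requires no separate treatment.
    have hprod : ‖a‖ * (‖B‖ * ‖d‖) * ‖C‖ ≤ ρ₀ := by
      calc ‖a‖ * (‖B‖ * ‖d‖) * ‖C‖ = (‖a‖ * ‖d‖) * (‖B‖ * ‖C‖) := by ring
        _ ≤ (‖a‖ * ‖d‖) * (ρ₀ * ‖a‖⁻¹ * ‖d‖⁻¹) := by gcongr
        _ = ρ₀ * ((‖a‖ * ‖a‖⁻¹) * (‖d‖ * ‖d‖⁻¹)) := by ring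
        _ ≤ ρ₀ * (1 * 1) := by
          gcongr
          · exact mul_inv_le_one
          · exact mul_inv_le_one
        _ = ρ₀ := by ring
    rw [le_div_iff₀ (by linarith)]
    have := mul_le_mul_of_nonneg_right hN (norm_nonneg C)
    linarith
end
end

section
/- Let m ≥ 1 and let k < n be integers. For k ≤ j ≤ n−1 let α_j, σ_j, t_j ∈ ℝ, let u_j ∈ ℝ^m (viewed as a 1×m row vector) and d_j ∈ ℝ^m (an m×1 column vector), and let D_j be the (m+2)×(m+2) real matrix with block form [[α_j, σ_j t_j, σ_j u_j],[0, σ_j, 0],[0, σ_j d_j, σ_j I_m]], where I_m is the m×m identity matrix. Then D_k D_{k+1} ⋯ D_{n−1} = [[Π_{j=k}^{n−1} α_j, T_{n,k}, U_{n,k}],[0, σ_{n,k}, 0],[0, σ_{n,k}·Σ_{j=k}^{n−1} d_j, σ_{n,k} I_m]], where σ_{n,k} = Π_{j=k}^{n−1} σ_j, U_{n,k} = Σ_{i=k}^{n−1} (Π_{j=k}^{i−1} α_j)(Π_{j=i}^{n−1} σ_j) · u_i, and T_{n,k} = Σ_{i=k}^{n−1} (Π_{j=k}^{i−1} α_j)(Π_{j=i}^{n−1}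 σ_j) · ( u_i·(Σ_{l=i+1}^{n−1} d_l) + t_i ), with u·d denoting the dot product and empty products equal to 1 and empty sums equal to 0. -/
/-!
The product is computed by downward induction on its first index: if the formula holds for
`D_{k+1} ⋯ D_{n-1}`, multiplying by `D_k` on the left gives it for `D_k ⋯ D_{n-1}`. The diagonal
entries and the `d`-column only need the first term of a product or sum to be split off. The entries
`T` and `U` of the first row are both of the form
`S k = ∑_{i=k}^{n-1} (∏_{j=k}^{i-1} α_j) (∏_{j=i}^{n-1} σ_j) X_i`, with `X_i` independent of `k`, and
`sum_weighted_Ico_succ` gives the recursion `S k = (∏_{j=k}^{n-1} σ_j) X_k + α_k S (k+1)`. The dot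
product of `u_k` with the accumulated column `∑_{l>k} d_l` supplies the remaining part of `X_k`.
-/

open scoped BigOperators

/-- Splitting off the first term of a weighted sum: the common factor `α k` of the later weights
comes out, leaving the weights based at `k + 1`. -/
lemma sum_weighted_Ico_succ (α σ X : ℕ → ℝ) {k n : ℕ} (h : k < n) :
    ∑ i ∈ Finset.Ico k n, (∏ j ∈ Finset.Ico k i, α j) * (∏ j ∈ Finset.Ico i n, σ j) * X i =
      (∏ j ∈ Finset.Ico k n, σ j) * X k +
        α k * ∑ i ∈ Finset.Ico (k + 1) n,
          (∏ j ∈ Finset.Ico (k + 1) i, α j) * (∏ j ∈ Finset.Ico i n, σ j) * X i := by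
  rw [Finset.sum_eq_sum_Ico_succ_bot h, Finset.mul_sum]
  congr 1
  · simp
  · refine Finset.sum_congr rfl fun i hi => ?_
    have hi' : k < i := (Finset.mem_Ico.mp hi).1
    rw [Finset.prod_eq_prod_Ico_succ_bot hi']
    ring

/-- exact block decomposition of the product
`D_k D_{k+1} ⋯ D_{n-1}` of the derivatives of the nonlinear scaling maps at the
tip. -/
theorem stmt_10 (m : ℕ) (hm : 1 ≤ m) (k n : ℕ) (hkn : k < n)
    (α σ t : ℕ → ℝ) (u d : ℕ → Fin m → ℝ)
    (Φ : ℕ → (ℝ × ℝ × (Fin m → ℝ)) → (ℝ × ℝ × (Fin m → ℝ)))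
    (hΦn : Φ n = id)
    (hΦ : ∀ j, k ≤ j → j < n → ∀ w,
      Φ j w =
        (α j * (Φ (j + 1) w).1 + σ j * t j * (Φ (j + 1) w).2.1 +
            σ j * ∑ r : Fin m, u j r * (Φ (j + 1) w).2.2 r,
          σ j * (Φ (j + 1) w).2.1,
          fun r => σ j * ((Φ (j + 1) w).2.1 * d j r + (Φ (j + 1) w).2.2 r))) :
    ∀ w : ℝ × ℝ × (Fin m → ℝ),
      Φ k w =
        ((∏ j ∈ Finset.Ico k n, α j) * w.1 +
            (∑ i ∈ Finset.Ico k n,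
              (∏ j ∈ Finset.Ico k i, α j) * (∏ j ∈ Finset.Ico i n, σ j) *
                ((∑ r : Fin m, u i r * ∑ l ∈ Finset.Ico (i + 1) n, d l r) + t i)) * w.2.1 +
            ∑ i ∈ Finset.Ico k n,
              (∏ j ∈ Finset.Ico k i, α j) * (∏ j ∈ Finset.Ico i n, σ j) *
                ∑ r : Fin m, u i r * w.2.2 r,
          (∏ j ∈ Finset.Ico k n, σ j) * w.2.1,
          fun r => (∏ j ∈ Finset.Ico k n, σ j) *
            ((∑ j ∈ Finset.Ico k n, d j r) * w.2.1 + w.2.2 r)) := by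
  intro w
  clear hm
  replace hkn := hkn.le
  -- The induction includes the empty product `k = n`, where the formula is that of the identity.
  induction hkn using Nat.decreasingInduction with
  | self => simp [hΦn]
  | of_succ k hkn ih =>
    have hk : k < n := hkn
    rw [hΦ k le_rfl hk w, ih fun j hj => hΦ j (by omega)]
    rw [sum_weighted_Ico_succ α σ
        (fun i => (∑ r : Fin m, u i r * ∑ l ∈ Finset.Ico (i + 1) n, d l r) + t i) hk,
      sum_weighted_Ico_succ α σ (fun i => ∑ r : Fin m, u i r * w.2.2 r) hk,
      Finset.prod_eq_prod_Ico_succ_bot hk α, Finset.prod_eq_prod_Ico_succ_bot hk σ]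
    -- The row `u k` applied to the last block, split into its `T` and `U` contributions.
    have hdot : ∑ r : Fin m, u k r * ((∏ j ∈ Finset.Ico (k + 1) n, σ j) *
          ((∑ j ∈ Finset.Ico (k + 1) n, d j r) * w.2.1 + w.2.2 r)) =
        (∏ j ∈ Finset.Ico (k + 1) n, σ j) *
          ((∑ r : Fin m, u k r * ∑ l ∈ Finset.Ico (k + 1) n, d l r) * w.2.1 +
            ∑ r : Fin m, u k r * w.2.2 r) := by
      rw [Finset.sum_mul, ← Finset.sum_add_distrib, Finset.mul_sum]
      exact Finset.sum_congr rfl fun r _ => by ring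
    refine Prod.ext ?_ (Prod.ext ?_ (funext fun r => ?_))
    · dsimp only
      rw [hdot]
      ring
    · dsimp only
      ring
    · dsimp only
      rw [Finset.sum_eq_sum_Ico_succ_bot hk]
      ring
end

section
/- Let m ≥ 1, let 0 < ε̄ ≤ 1/2 and 0 < σ < 1, and fix k ≥ 0. Let t_j ∈ ℝ and u_j, d_j ∈ ℝ^m for j ≥ k satisfy |t_j| ≤ ε̄^{2^j}, ‖u_j‖ ≤ ε̄^{2^j} and ‖d_j‖ ≤ ε̄^{2^j}. For n > k define d_{n,k} = Σ_{j=k}^{n−1} d_j, u_{n,k} = Σ_{j=k}^{n−1} (−σ)^{j−k} u_j, and t_{n,k} = Σ_{j=k}^{n−1} (−σ)^{j−k} ( u_j · Σ_{i=j+1}^{n−1} d_i + t_j ). Then as n → ∞ these converge to limits d_{*,k}, u_{*,k}, t_{*,k}, and there is a constant C, depending only on σ, such that for all n > k: ‖d_{n,k}‖ ≤ 2 ε̄^{2^k}, ‖u_{n,k}‖ ≤ 2 ε̄^{2^k}, |t_{n,k}| ≤ C ε̄^{2^k}, and ‖d_{n,k} − d_{*,k}‖ ≤ C ε̄^{2^n},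 ‖u_{n,k} − u_{*,k}‖ ≤ C ε̄^{2^n}, |t_{n,k} − t_{*,k}| ≤ C ε̄^{2^n}; i.e., the convergence is super-exponentially fast. -/
open scoped BigOperators RealInnerProductSpace

/-!
Write `a j = ε̄ ^ 2 ^ j`. Since `a (j + 1) = (a j) ^ 2` and `a j ≤ 1/2`, the sequence `a` at least
halves at every step, so a tail `∑_{j ≥ p} a j` is at most `2 * a p`. Hence a sequence starting
at `0` at time `k` with increments `‖f (n + 1) - f n‖ ≤ M * a n` stays within `2 * M * a k` of `0`
and converges to a limit at rate `2 * M * a n` (`exists_limit_of_increment_le`).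

For `d_{n,k}` and `u_{n,k}` the increments are bounded with `M = 1`. For `t_{n,k}` the increment is
`⟪u_{n,k}, d_n⟫ + (-σ) ^ (n - k) * t_n`, of size at most `2 * a k * a n + a n ≤ 2 * a n`, so
`M = 2`. In particular `C = 4` works for every `σ`.
-/

/-- Telescoping against a sequence `a` that halves at every step: the term `-2 * a q` on the right
is what makes the induction on `q` close. -/
lemma norm_sub_le_of_increment_le {E : Type*} [NormedAddCommGroup E] {a : ℕ → ℝ} {f : ℕ → E}
    {M : ℝ} {k : ℕ} (hM : 0 ≤ M) (ha : ∀ j, 2 * a (j + 1) ≤ a j)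
    (hf : ∀ n, k ≤ n → ‖f (n + 1) - f n‖ ≤ M * a n) {p q : ℕ} (hp : k ≤ p) (hpq : p ≤ q) :
    ‖f q - f p‖ ≤ M * (2 * a p - 2 * a q) := by
  induction q, hpq using Nat.le_induction with
  | base => simp
  | succ q hq ih =>
    have h1 := hf q (hp.trans hq)
    have h2 : ‖f (q + 1) - f p‖ ≤ ‖f (q + 1) - f q‖ + ‖f q - f p‖ :=
      norm_sub_le_norm_sub_add_norm_sub _ _ _
    have h3 := mul_le_mul_of_nonneg_left (ha q) hM
    linarith

lemma exists_limit_of_increment_le {E : Type*} [NormedAddCommGroup E] [CompleteSpace E]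
    {a : ℕ → ℝ} {f : ℕ → E} {M : ℝ} {k : ℕ} (hM : 0 ≤ M) (ha0 : ∀ j, 0 ≤ a j)
    (ha : ∀ j, 2 * a (j + 1) ≤ a j) (hlim : Filter.Tendsto a Filter.atTop (nhds 0))
    (hfk : f k = 0) (hf : ∀ n, k ≤ n → ‖f (n + 1) - f n‖ ≤ M * a n) :
    ∃ L : E, ∀ n, k ≤ n → ‖f n‖ ≤ 2 * M * a k ∧ ‖f n - L‖ ≤ 2 * M * a n := by
  have key : ∀ p q, k ≤ p → p ≤ q → ‖f q - f p‖ ≤ 2 * M * a p := by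
    intro p q hp hpq
    have h1 := norm_sub_le_of_increment_le hM ha hf hp hpq
    have h2 := mul_nonneg hM (ha0 q)
    linarith
  have hb : Filter.Tendsto (fun n => 2 * M * a (n + k)) Filter.atTop (nhds 0) := by
    simpa using ((Filter.tendsto_add_atTop_iff_nat k).2 hlim).const_mul (2 * M)
  have hc : CauchySeq (fun n => f (n + k)) := by
    refine cauchySeq_of_le_tendsto_0' _ (fun p q hpq => ?_) hb
    rw [dist_comm, dist_eq_norm]
    exact key _ _ (by omega) (by omega)
  obtain ⟨L, hL⟩ := cauchySeq_tendsto_of_complete hc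
  have hL' : Filter.Tendsto f Filter.atTop (nhds L) := (Filter.tendsto_add_atTop_iff_nat k).1 hL
  refine ⟨L, fun n hn => ⟨?_, ?_⟩⟩
  · simpa [hfk] using key k n le_rfl hn
  · rw [norm_sub_rev]
    refine le_of_tendsto (hL'.sub_const (f n)).norm ?_
    filter_upwards [Filter.eventually_ge_atTop n] with q hq
    exact key n q hn hq

/-- the normalized entries `d_{n,k}`, `u_{n,k}`, `t_{n,k}` of the
derivative of the composed scaling map are `O(ε̄^{2^k})` and converge
super-exponentially fast to limits `d_{*,k}`, `u_{*,k}`, `t_{*,k}`, with a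
constant depending only on `σ`. -/
theorem stmt_11 (σ : ℝ) (hσ0 : 0 < σ) (hσ1 : σ < 1) :
    ∃ C : ℝ, 0 < C ∧
      ∀ (m : ℕ), 1 ≤ m →
      ∀ (ebar : ℝ), 0 < ebar → ebar ≤ 1 / 2 →
      ∀ (k : ℕ) (t : ℕ → ℝ) (u d : ℕ → EuclideanSpace ℝ (Fin m)),
        (∀ j, k ≤ j →
          |t j| ≤ ebar ^ 2 ^ j ∧ ‖u j‖ ≤ ebar ^ 2 ^ j ∧ ‖d j‖ ≤ ebar ^ 2 ^ j) →
        ∃ (dstar ustar : EuclideanSpace ℝ (Fin m)) (tstar : ℝ),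
          ∀ n : ℕ, k < n →
            ‖∑ j ∈ Finset.Ico k n, d j‖ ≤ 2 * ebar ^ 2 ^ k ∧
            ‖∑ j ∈ Finset.Ico k n, (-σ) ^ (j - k) • u j‖ ≤ 2 * ebar ^ 2 ^ k ∧
            |∑ j ∈ Finset.Ico k n, (-σ) ^ (j - k) *
                (⟪u j, ∑ i ∈ Finset.Ico (j + 1) n, d i⟫ + t j)| ≤ C * ebar ^ 2 ^ k ∧
            ‖(∑ j ∈ Finset.Ico k n, d j) - dstar‖ ≤ C * ebar ^ 2 ^ n ∧
            ‖(∑ j ∈ Finset.Ico k n, (-σ) ^ (j - k) • u j) - ustar‖ ≤ C * ebar ^ 2 ^ n ∧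
            |(∑ j ∈ Finset.Ico k n, (-σ) ^ (j - k) *
                (⟪u j, ∑ i ∈ Finset.Ico (j + 1) n, d i⟫ + t j)) - tstar| ≤
              C * ebar ^ 2 ^ n := by
  refine ⟨4, by norm_num, ?_⟩
  intro m _ ebar he0 he1 k t u d h
  set a : ℕ → ℝ := fun j => ebar ^ 2 ^ j with ha_def
  have ha0 : ∀ j, 0 ≤ a j := fun j => by positivity
  have hahalf : ∀ j, a j ≤ 1 / 2 := fun j =>
    (pow_le_of_le_one he0.le (by linarith) (by positivity)).trans he1
  have ha : ∀ j, 2 * a (j + 1) ≤ a j := by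
    intro j
    have h1 : a (j + 1) = a j * a j := by
      simp only [ha_def]
      rw [← pow_add, pow_succ 2 j, mul_two]
    rw [h1]
    nlinarith [ha0 j, hahalf j]
  have hlim : Filter.Tendsto a Filter.atTop (nhds 0) :=
    (tendsto_pow_atTop_nhds_zero_of_lt_one he0.le (by linarith)).comp
      (tendsto_pow_atTop_atTop_of_one_lt (by norm_num))
  have hσ : ∀ i : ℕ, |(-σ) ^ i| ≤ 1 := fun i => by
    rw [abs_pow, abs_neg, abs_of_pos hσ0]
    exact pow_le_one₀ hσ0.le hσ1.le
  obtain ⟨dstar, hd⟩ := exists_limit_of_increment_le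
    (f := fun n => ∑ j ∈ Finset.Ico k n, d j) (M := 1) (k := k) zero_le_one ha0 ha hlim (by simp)
    (fun n hn => by
      rw [Finset.sum_Ico_succ_top hn, add_sub_cancel_left, one_mul]
      exact (h n hn).2.2)
  obtain ⟨ustar, hu⟩ := exists_limit_of_increment_le
    (f := fun n => ∑ j ∈ Finset.Ico k n, (-σ) ^ (j - k) • u j) (M := 1) (k := k)
    zero_le_one ha0 ha hlim (by simp)
    (fun n hn => by
      rw [Finset.sum_Ico_succ_top hn, add_sub_cancel_left, one_mul, norm_smul, Real.norm_eq_abs]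
      exact (mul_le_of_le_one_left (norm_nonneg _) (hσ _)).trans (h n hn).2.1)
  -- Only the upper limit of the inner sum and the term `j = n` change when `n` is increased.
  have hstep : ∀ n, k ≤ n →
      (∑ j ∈ Finset.Ico k (n + 1), (-σ) ^ (j - k) *
          (⟪u j, ∑ i ∈ Finset.Ico (j + 1) (n + 1), d i⟫ + t j)) -
        (∑ j ∈ Finset.Ico k n, (-σ) ^ (j - k) *
          (⟪u j, ∑ i ∈ Finset.Ico (j + 1) n, d i⟫ + t j)) =
      ⟪∑ j ∈ Finset.Ico k n, (-σ) ^ (j - k) • u j, d n⟫ + (-σ) ^ (n - k) * t n := by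
    intro n hn
    rw [Finset.sum_Ico_succ_top hn, add_sub_right_comm, ← Finset.sum_sub_distrib, sum_inner]
    congr 1
    · refine Finset.sum_congr rfl fun j hj => ?_
      rw [Finset.sum_Ico_succ_top (Finset.mem_Ico.1 hj).2, inner_add_right, real_inner_smul_left]
      ring
    · simp
  obtain ⟨tstar, ht⟩ := exists_limit_of_increment_le
    (f := fun n => ∑ j ∈ Finset.Ico k n, (-σ) ^ (j - k) *
      (⟪u j, ∑ i ∈ Finset.Ico (j + 1) n, d i⟫ + t j)) (M := 2) (k := k)
    zero_le_two ha0 ha hlim (by simp)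
    (fun n hn => by
      rw [hstep n hn]
      have hun : ‖∑ j ∈ Finset.Ico k n, (-σ) ^ (j - k) • u j‖ ≤ 1 := by
        have := (hu n hn).1
        have := hahalf k
        linarith
      have h1 : ‖⟪∑ j ∈ Finset.Ico k n, (-σ) ^ (j - k) • u j, d n⟫‖ ≤ a n :=
        (norm_inner_le_norm _ _).trans
          ((mul_le_of_le_one_left (norm_nonneg _) hun).trans (h n hn).2.2)
      have h2 : ‖(-σ) ^ (n - k) * t n‖ ≤ a n := by
        rw [norm_mul, Real.norm_eq_abs, Real.norm_eq_abs]
        exact (mul_le_of_le_one_left (abs_nonneg _) (hσ _)).trans (h n hn).1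
      have h3 := norm_add_le (⟪∑ j ∈ Finset.Ico k n, (-σ) ^ (j - k) • u j, d n⟫)
        ((-σ) ^ (n - k) * t n)
      linarith)
  refine ⟨dstar, ustar, tstar, fun n hn => ?_⟩
  obtain ⟨hd1, hd2⟩ := hd n hn.le
  obtain ⟨hu1, hu2⟩ := hu n hn.le
  obtain ⟨ht1, ht2⟩ := ht n hn.le
  rw [Real.norm_eq_abs] at ht1 ht2
  have hn0 := ha0 n
  change _ ≤ 2 * a k ∧ _ ≤ 2 * a k ∧ _ ≤ 4 * a k ∧ _ ≤ 4 * a n ∧ _ ≤ 4 * a n ∧ _ ≤ 4 * a n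
  refine ⟨?_, ?_, ?_, ?_, ?_, ?_⟩ <;> linarith
end

section
/- In the setting of the composed scaling maps Ψ^n_k = D^n_k ∘ (id + S^n_k), assume each s_j is differentiable and write S^n_k for the first (ℝ-valued) component of S^n_k, with S^n_n := 0 and Ψ^n_n := id. Then for every point w and every k ≤ j < n the exact recursion ∂ₓS^n_j(w) = ∂ₓS^n_{j+1}(w) · (1 + ∂ₓs_j(Ψ^n_{j+1}(w))) + ∂ₓs_j(Ψ^n_{j+1}(w)) holds. Consequently, if 0 < σ̂ < 1 and C₀ > 0 are such that |∂ₓ s_j(Ψ^n_{j+1}(w))| ≤ C₀ σ̂^{n−j} for all k ≤ j ≤ n−1, then |∂ₓS^n_k(w)| ≤ exp( C₀ σ̂/(1−σ̂) ) − 1; in particular |∂ₓS^n_k| is bounded by a constant depending only on C₀ and σ̂, uniformly in k and n. -/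
/-!
Each `Dc j` is block triangular: `Dc j (x, p) = (A * x + L p, Q p)` with `A ≠ 0`
(`exists_form_of_step`). Hence, with `p = (y, z)` held fixed, `Φ (j + 1)` moves only in its first
coordinate, which is `A * (x + S1 (j + 1) (x, p))` up to a constant. Comparing the first coordinates
of the two expressions for `Φ j` gives
`S1 j (x, p) = S1 (j + 1) (x, p) + A⁻¹ * sf j (Φ (j + 1) (x, p)) + const`,
and the chain rule yields the recursion, the factors `A⁻¹` and `A` cancelling; differentiability of
the slices is carried along by descending induction from `S1 n = 0`.

The recursion gives `1 + |∂ₓS_j| ≤ (1 + |∂ₓS_{j+1}|) * (1 + |∂ₓs_j|)`, and `1 + c ≤ exp c` together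
with the geometric sum `∑ σ̂ ^ (n - j)` bounds the resulting product.
-/

open scoped BigOperators RealInnerProductSpace

noncomputable section

/-- The linear model map `D_j` on `ℝ × ℝ × ℝᵐ`, given in block form by
`[[α, σt, σu],[0, σ, 0],[0, σd, σ Iₘ]]`. -/
def Dmap (m : ℕ) (a s tt : ℝ) (u d : EuclideanSpace ℝ (Fin m))
    (w : ℝ × ℝ × EuclideanSpace ℝ (Fin m)) : ℝ × ℝ × EuclideanSpace ℝ (Fin m) :=
  (a * w.1 + s * tt * w.2.1 + s * ⟪u, w.2.2⟫, s * w.2.1, s • (w.2.1 • d + w.2.2))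

/-- The partial derivative in the first (`x`-) coordinate of a scalar function
on `ℝ × ℝ × ℝᵐ`. -/
def pdx (m : ℕ) (f : ℝ × ℝ × EuclideanSpace ℝ (Fin m) → ℝ)
    (p : ℝ × ℝ × EuclideanSpace ℝ (Fin m)) : ℝ :=
  deriv (fun x : ℝ => f (x, p.2)) p.1

/-- Block triangular form of the composed linear maps. Only the dependence on `x` matters for the
recursion, so linearity of `L` and `Q` is not recorded. -/
lemma exists_form_of_step (m k n : ℕ)
    (α σv t : ℕ → ℝ) (u d : ℕ → EuclideanSpace ℝ (Fin m)) (hα : ∀ j, α j ≠ 0)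
    (Dc : ℕ → ℝ × ℝ × EuclideanSpace ℝ (Fin m) → ℝ × ℝ × EuclideanSpace ℝ (Fin m))
    (hDn : Dc n = id)
    (hDc : ∀ j, k ≤ j → j < n → ∀ w,
      Dc j w = Dmap m (α j) (σv j) (t j) (u j) (d j) (Dc (j + 1) w))
    (j : ℕ) (hkj : k ≤ j) (hjn : j ≤ n) :
    ∃ A : ℝ, A ≠ 0 ∧ ∃ L : ℝ × EuclideanSpace ℝ (Fin m) → ℝ,
      ∃ Q : ℝ × EuclideanSpace ℝ (Fin m) → ℝ × EuclideanSpace ℝ (Fin m),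
        ∀ x p, Dc j (x, p) = (A * x + L p, Q p) := by
  refine Nat.decreasingInduction' (P := fun j => ∃ A : ℝ, A ≠ 0 ∧
      ∃ L : ℝ × EuclideanSpace ℝ (Fin m) → ℝ,
      ∃ Q : ℝ × EuclideanSpace ℝ (Fin m) → ℝ × EuclideanSpace ℝ (Fin m),
        ∀ x p, Dc j (x, p) = (A * x + L p, Q p)) ?_ hjn ?_
  · rintro i hin hji ⟨A, hA, L, Q, h⟩
    refine ⟨α i * A, mul_ne_zero (hα i) hA,
      fun p => α i * L p + σv i * t i * (Q p).1 + σv i * ⟪u i, (Q p).2⟫,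
      fun p => (σv i * (Q p).1, σv i • ((Q p).1 • d i + (Q p).2)), fun x p => ?_⟩
    rw [hDc i (hkj.trans hji) hin, h]
    simp only [Dmap, Prod.mk.injEq, and_true]
    ring
  · exact ⟨1, one_ne_zero, fun _ => 0, id, fun x p => by simp [hDn]⟩

lemma hasDerivAt_of_slice_eq {F G f : ℝ → ℝ} {A c e x : ℝ} (hA : A ≠ 0)
    (hF : ∀ x, F x = G x + A⁻¹ * f (A * (x + G x) + c) + e)
    (hf : Differentiable ℝ f) (hG : DifferentiableAt ℝ G x) :
    HasDerivAt F (deriv G x * (1 + deriv f (A * (x + G x) + c))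
      + deriv f (A * (x + G x) + c)) x := by
  have hin : HasDerivAt (fun x => A * (x + G x) + c) (A * (1 + deriv G x)) x :=
    (((hasDerivAt_id x).add hG.hasDerivAt).const_mul A).add_const c
  have hout := (hf (A * (x + G x) + c)).hasDerivAt.comp x hin
  have h := (hG.hasDerivAt.add (hout.const_mul A⁻¹)).add_const e
  rw [funext hF]
  refine h.congr_deriv ?_
  field_simp
  ring

/-- Discrete Grönwall estimate for the recursion, solved downwards from `a n = 0`. -/
lemma abs_le_of_recursion {k n : ℕ} (hkn : k ≤ n) {a b : ℕ → ℝ} (han : a n = 0)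
    (hrec : ∀ j, k ≤ j → j < n → a j = a (j + 1) * (1 + b j) + b j)
    {C q : ℝ} (hC : 0 < C) (hq0 : 0 < q) (hq1 : q < 1)
    (hb : ∀ j, k ≤ j → j < n → |b j| ≤ C * q ^ (n - j)) :
    |a k| ≤ Real.exp (C * q / (1 - q)) - 1 := by
  have hq : 0 < 1 - q := by linarith
  -- the exponent is `C` times the partial geometric sum `q + ⋯ + q ^ (n - k)`
  have main : 1 + |a k| ≤ Real.exp (C * (q - q ^ (n - k + 1)) / (1 - q)) := by
    refine Nat.decreasingInduction'
      (P := fun j => 1 + |a j| ≤ Real.exp (C * (q - q ^ (n - j + 1)) / (1 - q))) ?_ hkn ?_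
    · intro j hjn hkj ih
      have hsplit : C * (q - q ^ (n - j + 1)) / (1 - q)
          = C * (q - q ^ (n - (j + 1) + 1)) / (1 - q) + C * q ^ (n - j) := by
        rw [show n - (j + 1) + 1 = n - j by omega]
        field_simp
        ring
      have hbj : 1 + |b j| ≤ Real.exp (C * q ^ (n - j)) := by
        have := Real.add_one_le_exp (C * q ^ (n - j))
        linarith [hb j hkj hjn]
      have haj : 1 + |a j| ≤ (1 + |a (j + 1)|) * (1 + |b j|) := by
        have h1 : |a j| ≤ |a (j + 1)| * |1 + b j| + |b j| := by
          rw [hrec j hkj hjn, ← abs_mul]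
          exact abs_add_le _ _
        have h2 : |1 + b j| ≤ 1 + |b j| := by
          simpa using abs_add_le 1 (b j)
        nlinarith [mul_le_mul_of_nonneg_left h2 (abs_nonneg (a (j + 1)))]
      rw [hsplit, Real.exp_add]
      exact haj.trans (mul_le_mul ih hbj (by positivity) (by positivity))
    · simp [han]
  have hle : Real.exp (C * (q - q ^ (n - k + 1)) / (1 - q)) ≤ Real.exp (C * q / (1 - q)) := by
    gcongr
    linarith [pow_pos hq0 (n - k + 1)]
  linarith

/-- the exact recursion
`∂ₓS^n_j = ∂ₓS^n_{j+1} (1 + ∂ₓs_j ∘ Ψ^n_{j+1}) + ∂ₓs_j ∘ Ψ^n_{j+1}`, and the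
resulting uniform bound `|∂ₓS^n_k| ≤ exp(C₀ σ̂/(1-σ̂)) - 1`. -/
theorem stmt_13 (m : ℕ) (hm : 1 ≤ m) (k n : ℕ) (hkn : k < n)
    (α σv t : ℕ → ℝ) (u d : ℕ → EuclideanSpace ℝ (Fin m))
    (hα : ∀ j, α j ≠ 0) (hσ : ∀ j, σv j ≠ 0)
    (sf : ℕ → ℝ × ℝ × EuclideanSpace ℝ (Fin m) → ℝ)
    (rf : ℕ → ℝ → EuclideanSpace ℝ (Fin m))
    (hs : ∀ j, Differentiable ℝ (sf j))
    (Φ Dc : ℕ → ℝ × ℝ × EuclideanSpace ℝ (Fin m) → ℝ × ℝ × EuclideanSpace ℝ (Fin m))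
    (hΦn : Φ n = id) (hDn : Dc n = id)
    (hΦ : ∀ j, k ≤ j → j < n → ∀ w,
      Φ j w = Dmap m (α j) (σv j) (t j) (u j) (d j)
        (Φ (j + 1) w + (sf j (Φ (j + 1) w), 0, rf j ((Φ (j + 1) w).2.1))))
    (hDc : ∀ j, k ≤ j → j < n → ∀ w,
      Dc j w = Dmap m (α j) (σv j) (t j) (u j) (d j) (Dc (j + 1) w))
    (S1 : ℕ → ℝ × ℝ × EuclideanSpace ℝ (Fin m) → ℝ)
    (R : ℕ → ℝ → EuclideanSpace ℝ (Fin m))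
    (hS1n : ∀ w, S1 n w = 0) (hRn : ∀ y : ℝ, R n y = 0)
    (hdec : ∀ j, k ≤ j → j ≤ n → ∀ w, Φ j w = Dc j (w + (S1 j w, 0, R j w.2.1))) :
    ∀ w : ℝ × ℝ × EuclideanSpace ℝ (Fin m),
      (∀ j, k ≤ j → j < n →
        pdx m (S1 j) w =
          pdx m (S1 (j + 1)) w * (1 + pdx m (sf j) (Φ (j + 1) w)) +
            pdx m (sf j) (Φ (j + 1) w)) ∧
      (∀ C₀ σh : ℝ, 0 < C₀ → 0 < σh → σh < 1 →
        (∀ j, k ≤ j → j < n → |pdx m (sf j) (Φ (j + 1) w)| ≤ C₀ * σh ^ (n - j)) →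
        |pdx m (S1 k) w| ≤ Real.exp (C₀ * σh / (1 - σh)) - 1) := by
  -- with `p` fixed, `S1 j` is obtained from `S1 (j + 1)` by one slice of `sf j`
  have slice : ∀ j, k ≤ j → j < n → ∀ p, ∃ A c e : ℝ, A ≠ 0 ∧
      ∃ q : ℝ × EuclideanSpace ℝ (Fin m),
      (∀ x, Φ (j + 1) (x, p) = (A * (x + S1 (j + 1) (x, p)) + c, q)) ∧
      ∀ x, S1 j (x, p) = S1 (j + 1) (x, p)
        + A⁻¹ * sf j (A * (x + S1 (j + 1) (x, p)) + c, q) + e := by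
    intro j hkj hjn p
    obtain ⟨A, hA, L, Q, hform⟩ := exists_form_of_step m k n α σv t u d hα Dc hDn hDc
      (j + 1) (by omega) (by omega)
    have hPhi : ∀ x, Φ (j + 1) (x, p) = (A * (x + S1 (j + 1) (x, p))
        + L (p + (0, R (j + 1) p.1)), Q (p + (0, R (j + 1) p.1))) := by
      intro x
      rw [hdec (j + 1) (by omega) (by omega), Prod.mk_add_mk, hform]
    generalize L (p + (0, R (j + 1) p.1)) = c at hPhi
    generalize Q (p + (0, R (j + 1) p.1)) = q at hPhi
    -- the first coordinate of `Φ j (x, p)`, computed in two ways, is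
    -- `α j * (A * (x + S1 (j + 1)) + c + sf j) + c₁` and `α j * (A * (x + S1 j) + l) + c₂`
    set l := L (p + (0, R j p.1)) with hl
    set qj := Q (p + (0, R j p.1)) with hqj
    refine ⟨A, c, (α j * A)⁻¹ * (α j * c + σv j * t j * q.1 + σv j * ⟪u j, q.2 + rf j q.1⟫
      - (α j * l + σv j * t j * qj.1 + σv j * ⟪u j, qj.2⟫)), hA, q, hPhi, fun x => ?_⟩
    have h1 := congrArg Prod.fst (hΦ j hkj hjn (x, p))
    rw [hdec j hkj hjn.le, hDc j hkj hjn, Prod.mk_add_mk, hform, hPhi] at h1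
    simp only [Dmap, Prod.fst_add, Prod.snd_add, add_zero, ← hl, ← hqj] at h1
    have hαj := hα j
    field_simp
    linarith
  have hsl : ∀ j q, Differentiable ℝ (fun x : ℝ => sf j (x, q)) := fun j q =>
    (hs j).comp (differentiable_id.prodMk (differentiable_const q))
  have step : ∀ j, k ≤ j → j < n → ∀ w : ℝ × ℝ × EuclideanSpace ℝ (Fin m),
      DifferentiableAt ℝ (fun x => S1 (j + 1) (x, w.2)) w.1 →
      HasDerivAt (fun x => S1 j (x, w.2))
        (pdx m (S1 (j + 1)) w * (1 + pdx m (sf j) (Φ (j + 1) w))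
          + pdx m (sf j) (Φ (j + 1) w)) w.1 := by
    intro j hkj hjn w hw
    obtain ⟨A, c, e, hA, q, hPhi, hS⟩ := slice j hkj hjn w.2
    have h := hasDerivAt_of_slice_eq (f := fun x => sf j (x, q)) hA hS (hsl j q) hw
    have hPhiw : Φ (j + 1) w = (A * (w.1 + S1 (j + 1) (w.1, w.2)) + c, q) := hPhi w.1
    simpa only [pdx, hPhiw] using h
  intro w
  have diff : ∀ j, k ≤ j → j ≤ n → DifferentiableAt ℝ (fun x => S1 j (x, w.2)) w.1 := by
    intro j hkj hjn
    refine Nat.decreasingInduction'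
      (P := fun j => DifferentiableAt ℝ (fun x => S1 j (x, w.2)) w.1) ?_ hjn ?_
    · exact fun i hin hji ih => (step i (hkj.trans hji) hin w ih).differentiableAt
    · simp [hS1n]
  have hrec : ∀ j, k ≤ j → j < n →
      pdx m (S1 j) w = pdx m (S1 (j + 1)) w * (1 + pdx m (sf j) (Φ (j + 1) w))
        + pdx m (sf j) (Φ (j + 1) w) :=
    fun j hkj hjn => (step j hkj hjn w (diff (j + 1) (by omega) (by omega))).deriv
  refine ⟨hrec, fun C₀ σh hC h0 h1 hb => ?_⟩
  exact abs_le_of_recursion (a := fun j => pdx m (S1 j) w) hkn.le (by simp [pdx, hS1n])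
    hrec hC h0 h1 hb
end
end

section
/- Given any real numbers 0 < A₀ < A₁, any 0 < σ < 1 and any integer p ≥ 2, the set of parameters b ∈ [0,1] for which there are infinitely many pairs of integers 0 < k < n satisfying A₀ < b^{p^k} / σ^{n−k} < A₁ is a dense G_δ subset of [0,1] of full Lebesgue measure. -/
/-!
Write `b = exp (-L y)` with `L = -log σ > 0` and `y > 0`. With `m = n - k`, the double inequality
says that `p ^ k * y` lies in the interval `(-log A₁ / L, -log A₀ / L)` up to translation by the
integer `m`, i.e. that the orbit of `y` under multiplication by `p` on the circle `ℝ / ℤ` visits a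
fixed nonempty open arc at time `k`; the requirement `m ≥ 1` is automatic for large `k`, since
`p ^ k * y → ∞`.

Multiplication by `p` is ergodic on the circle, so almost every orbit visits the arc infinitely
often (`ae_frequently_nsmul_mem`). This lifts to almost every `y : ℝ`
(`ae_real_of_ae_unitAddCircle`), and the differentiable map `y ↦ exp (-L y)` sends null sets to null
sets, which gives full measure, and hence density. The `G_δ` property is formal: the set is the
intersection of `[0,1]` with the upper limit of countably many open sets.
-/

/-- The set of parameters `b ∈ [0,1]` admitting infinitely many pairs
`0 < k < n` with `A₀ < b^{p^k}/σ^{n-k} < A₁`. -/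
def goodParamSet (A₀ A₁ σ : ℝ) (p : ℕ) : Set ℝ :=
  {b : ℝ | b ∈ Set.Icc (0 : ℝ) 1 ∧
    {q : ℕ × ℕ | 0 < q.1 ∧ q.1 < q.2 ∧
      A₀ < b ^ p ^ q.1 / σ ^ (q.2 - q.1) ∧
      b ^ p ^ q.1 / σ ^ (q.2 - q.1) < A₁}.Infinite}

open MeasureTheory Filter Set Topology

/-- Ergodicity and Poincaré recurrence for `y ↦ p • y`: the set of points visiting `U` infinitely
often is invariant, and it contains almost all of the non-null set `U`, hence it has full measure. -/
lemma ae_frequently_nsmul_mem {p : ℕ} (hp : 2 ≤ p) {U : Set UnitAddCircle} (hU : IsOpen U)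
    (hne : U.Nonempty) :
    ∀ᵐ y : UnitAddCircle, ∃ᶠ k in atTop, (p ^ k) • y ∈ U := by
  set f : UnitAddCircle → UnitAddCircle := fun y => p • y with hf
  have herg : Ergodic f := AddCircle.ergodic_nsmul (T := 1) (n := p) (by omega)
  have hit : ∀ k y, f^[k] y = (p ^ k) • y := by
    intro k y
    induction k with
    | zero => simp
    | succ k ih => rw [Function.iterate_succ_apply', ih, pow_succ', mul_smul]
  set E : Set UnitAddCircle := {y | ∃ᶠ k in atTop, f^[k] y ∈ U} with hE
  have hEm : MeasurableSet E := by
    have : E = ⋂ a : ℕ, ⋃ k : ℕ, ⋃ _ : a ≤ k, f^[k] ⁻¹' U := by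
      ext y; simp [hE, frequently_atTop]
    rw [this]
    exact .iInter fun a => .iUnion fun k => .iUnion fun _ =>
      (herg.measurable.iterate k) hU.measurableSet
  have hinv : f ⁻¹' E = E := by
    ext y
    change (∃ᶠ k in atTop, f^[k] (f y) ∈ U) ↔ ∃ᶠ k in atTop, f^[k] y ∈ U
    conv_rhs => rw [← map_add_atTop_eq_nat 1, frequently_map]
    rfl
  have hrec := (herg.toMeasurePreserving.conservative).ae_mem_imp_frequently_image_mem
    hU.measurableSet.nullMeasurableSet
  rcases herg.toPreErgodic.ae_mem_or_ae_notMem hEm hinv with h | h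
  · filter_upwards [h] with y hy
    simpa only [hE, mem_ofPred_eq, hit] using hy
  · exfalso
    have h0 : volume U = 0 := by
      rw [measure_eq_zero_iff_ae_notMem]
      filter_upwards [h, hrec] with y hy hy' hyU
      exact hy (hy' hyU)
    exact (hU.measure_pos volume hne).ne' h0

lemma ae_real_of_ae_unitAddCircle {P : UnitAddCircle → Prop} (h : ∀ᵐ y : UnitAddCircle, P y) :
    ∀ᵐ y : ℝ, P (y : UnitAddCircle) := by
  have key : ∀ n : ℤ, ∀ᵐ y : ℝ, y ∈ Ioc (n : ℝ) (n + 1) → P (y : UnitAddCircle) := by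
    intro n
    rw [← ae_restrict_iff' measurableSet_Ioc]
    exact (UnitAddCircle.measurePreserving_mk (n : ℝ)).quasiMeasurePreserving.ae h
  filter_upwards [ae_all_iff.2 key] with y hy
  refine hy (⌈y⌉ - 1) ?_
  push_cast
  constructor
  · linarith [Int.ceil_lt_add_one y]
  · linarith [Int.le_ceil y]

/-- The set of parameters lying in infinitely many of the open sets `A₀ < b^{p^k}/σ^{n-k} < A₁` is
the intersection, over finite sets `F` of pairs, of the unions over pairs outside `F`. -/
lemma isGδ_goodParamSet (A₀ A₁ σ : ℝ) (p : ℕ) : IsGδ (goodParamSet A₀ A₁ σ p) := by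
  have : goodParamSet A₀ A₁ σ p = Icc (0 : ℝ) 1 ∩ ⋂ F : Finset (ℕ × ℕ),
      {b : ℝ | ∃ q : ℕ × ℕ, q ∉ F ∧ 0 < q.1 ∧ q.1 < q.2 ∧
        A₀ < b ^ p ^ q.1 / σ ^ (q.2 - q.1) ∧ b ^ p ^ q.1 / σ ^ (q.2 - q.1) < A₁} := by
    ext b
    simp only [goodParamSet, mem_ofPred_eq, mem_inter_iff, mem_iInter]
    refine and_congr_right fun _ => ⟨fun h F => ?_, fun h hfin => ?_⟩
    · obtain ⟨q, hq, hqF⟩ := h.exists_notMem_finset F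
      exact ⟨q, hqF, hq⟩
    · obtain ⟨q, hqF, hq⟩ := h hfin.toFinset
      exact hqF (hfin.mem_toFinset.2 hq)
  rw [this]
  refine isClosed_Icc.isGδ.inter (.iInter fun F => IsOpen.isGδ ?_)
  simp only [ofPred_exists]
  refine isOpen_iUnion fun q => ?_
  refine isOpen_const.and (isOpen_const.and (isOpen_const.and (IsOpen.and ?_ ?_)))
  · exact isOpen_lt continuous_const (by fun_prop)
  · exact isOpen_lt (by fun_prop) continuous_const

/-- The arc of the circle that encodes the double inequality in the coordinate
`y = -log b / L`, `L = -log σ`. -/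
def visitArc (A₀ A₁ L : ℝ) : Set UnitAddCircle :=
  (fun y : ℝ => (y : UnitAddCircle)) '' Ioo (-(Real.log A₁ / L)) (-(Real.log A₀ / L))

/-- A visit of the orbit of `y` to the arc at time `k` means that `p ^ k * y - z` is an integer `m`
for some `z` in the interval; the ratio for the pair `(k, k + m)` is then `exp (-L z)`. -/
lemma exp_mem_goodParamSet {A₀ A₁ L y : ℝ} {p : ℕ} (hA₀ : 0 < A₀) (hA : A₀ < A₁) (hL : 0 < L)
    (hp : 2 ≤ p) (hy : 0 < y)
    (h : ∃ᶠ k in atTop, (p ^ k) • (y : UnitAddCircle) ∈ visitArc A₀ A₁ L) :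
    Real.exp (-L * y) ∈ goodParamSet A₀ A₁ (Real.exp (-L)) p := by
  refine ⟨⟨(Real.exp_pos _).le, Real.exp_le_one_iff.2 (by nlinarith)⟩, ?_⟩
  have hlarge : ∀ᶠ k : ℕ in atTop, -(Real.log A₀ / L) ≤ (p : ℝ) ^ k * y := by
    have hp1 : (1 : ℝ) < p := by exact_mod_cast (by omega : 1 < p)
    exact ((tendsto_pow_atTop_atTop_of_one_lt hp1).atTop_mul_const hy).eventually_ge_atTop _
  have hfreq := h.and_eventually (hlarge.and (eventually_gt_atTop 0))
  -- Infinitely many times `k` occur as first coordinates of admissible pairs.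
  refine Set.Infinite.of_image Prod.fst ((Nat.frequently_atTop_iff_infinite.1 hfreq).mono ?_)
  rintro k ⟨⟨z, ⟨hz1, hz2⟩, hz⟩, hk, hk0⟩
  have hz' : ((p ^ k * y - z : ℝ) : UnitAddCircle) = 0 := by
    have h2 : ((p ^ k * y : ℝ) : UnitAddCircle) = (p ^ k) • (y : UnitAddCircle) := by
      rw [← AddCircle.coe_nsmul, nsmul_eq_mul]; push_cast; rfl
    rw [AddCircle.coe_sub, h2]
    simpa [sub_eq_zero] using hz.symm
  obtain ⟨m, hm⟩ := (AddCircle.coe_eq_zero_iff (1 : ℝ)).1 hz'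
  have hm' : (m : ℝ) = p ^ k * y - z := by simpa using hm
  have hmpos : 0 < m := by
    have : (0 : ℝ) < m := by linarith
    exact_mod_cast this
  lift m to ℕ using hmpos.le
  have hmpos' : 0 < m := by exact_mod_cast hmpos
  have hm'' : (m : ℝ) = p ^ k * y - z := by simpa using hm'
  have hval : Real.exp (-L * y) ^ p ^ k / Real.exp (-L) ^ (k + m - k) = Real.exp (-(L * z)) := by
    rw [Nat.add_sub_cancel_left, ← Real.exp_nat_mul, ← Real.exp_nat_mul, ← Real.exp_sub, hm'']
    push_cast
    ring_nf
  refine ⟨(k, k + m), ⟨hk0, by simpa using hmpos', ?_, ?_⟩, rfl⟩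
  · change A₀ < Real.exp (-L * y) ^ p ^ k / Real.exp (-L) ^ (k + m - k)
    rw [hval, ← Real.log_lt_iff_lt_exp hA₀]
    have := (div_lt_iff₀ hL).1 (lt_neg.1 hz2)
    linarith
  · change Real.exp (-L * y) ^ p ^ k / Real.exp (-L) ^ (k + m - k) < A₁
    rw [hval, ← Real.lt_log_iff_exp_lt (hA₀.trans hA)]
    have := (lt_div_iff₀ hL).1 (neg_lt.1 hz1)
    linarith

lemma volume_Icc_diff_goodParamSet (A₀ A₁ σ : ℝ) (p : ℕ)
    (hA₀ : 0 < A₀) (hA : A₀ < A₁) (hσ0 : 0 < σ) (hσ1 : σ < 1) (hp : 2 ≤ p) :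
    volume (Icc (0 : ℝ) 1 \ goodParamSet A₀ A₁ σ p) = 0 := by
  obtain ⟨L, hL, rfl⟩ : ∃ L : ℝ, 0 < L ∧ Real.exp (-L) = σ :=
    ⟨-Real.log σ, neg_pos.2 (Real.log_neg hσ0 hσ1), by rw [neg_neg, Real.exp_log hσ0]⟩
  have hopen : IsOpen (visitArc A₀ A₁ L) := QuotientAddGroup.isOpenMap_coe _ isOpen_Ioo
  have hne : (visitArc A₀ A₁ L).Nonempty := by
    refine (nonempty_Ioo.2 ?_).image _
    have := Real.log_lt_log hA₀ hA
    gcongr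
  have hae := ae_real_of_ae_unitAddCircle (ae_frequently_nsmul_mem hp hopen hne)
  rw [ae_iff] at hae
  have himg := addHaar_image_eq_zero_of_differentiableOn_of_addHaar_eq_zero volume
    (f := fun y : ℝ => Real.exp (-L * y)) (by fun_prop) hae
  -- The endpoints `0` and `1` are not covered by the coordinate `b = exp (-L y)`, `y > 0`.
  refine measure_mono_null (t := _ ∪ {0, 1}) ?_ (measure_union_null himg (by
    exact (Set.toFinite {(0 : ℝ), 1}).measure_zero _))
  rintro b ⟨⟨hb0, hb1⟩, hb⟩
  by_cases hb' : b = 0 ∨ b = 1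
  · exact Or.inr hb'
  push Not at hb'
  have hb0' : 0 < b := lt_of_le_of_ne hb0 hb'.1.symm
  have hb1' : b < 1 := lt_of_le_of_ne hb1 hb'.2
  have hby : Real.exp (-L * (-Real.log b / L)) = b := by
    rw [show -L * (-Real.log b / L) = Real.log b by field_simp, Real.exp_log hb0']
  refine Or.inl ⟨-Real.log b / L, fun hfr => hb ?_, hby⟩
  rw [← hby]
  exact exp_mem_goodParamSet hA₀ hA hL hp
    (div_pos (neg_pos.2 (Real.log_neg hb0' hb1')) hL) hfr

/-- for any `0 < A₀ < A₁`, `0 < σ < 1` and `p ≥ 2`, the set of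
`b ∈ [0,1]` with infinitely many pairs `0 < k < n` satisfying
`A₀ < b^{p^k}/σ^{n-k} < A₁` is a dense `G_δ` subset of `[0,1]` of full
Lebesgue measure. -/
theorem stmt_14 (A₀ A₁ σ : ℝ) (p : ℕ)
    (hA₀ : 0 < A₀) (hA : A₀ < A₁) (hσ0 : 0 < σ) (hσ1 : σ < 1) (hp : 2 ≤ p) :
    IsGδ (goodParamSet A₀ A₁ σ p) ∧
    Set.Icc (0 : ℝ) 1 ⊆ closure (goodParamSet A₀ A₁ σ p) ∧
    MeasureTheory.volume (Set.Icc (0 : ℝ) 1 \ goodParamSet A₀ A₁ σ p) = 0 := by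
  have hvol := volume_Icc_diff_goodParamSet A₀ A₁ σ p hA₀ hA hσ0 hσ1 hp
  refine ⟨isGδ_goodParamSet A₀ A₁ σ p, ?_, hvol⟩
  rw [← closure_Ioo (zero_ne_one' ℝ)]
  refine closure_minimal ?_ isClosed_closure
  -- The open set `(0,1) \ closure` is null, hence empty.
  have hopen : IsOpen (Ioo (0 : ℝ) 1 \ closure (goodParamSet A₀ A₁ σ p)) :=
    isOpen_Ioo.sdiff isClosed_closure
  have h0 := (hopen.measure_eq_zero_iff volume).1
    (measure_mono_null (sdiff_subset_sdiff Ioo_subset_Icc_self subset_closure) hvol)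
  exact sdiff_eq_empty.1 h0
end

section
/- Let n, m ≥ 1 and let f : ℝ^n × ℝ^m → ℝ^m be continuous and, for each fixed x ∈ ℝ^n, continuously differentiable in the second variable u ∈ ℝ^m. Suppose there is d > 0 such that for all (x,u) ∈ ℝ^n × ℝ^m and every 1 ≤ i ≤ m, the Jacobian matrix J(x,u) of u ↦ f(x,u) satisfies |J(x,u)_{ii}| − Σ_{j ≠ i} |J(x,u)_{ij}| ≥ d. Then there exists a unique map g : ℝ^n → ℝ^m such that f(x, g(x)) = 0 for all x ∈ ℝ^n; moreover g is continuous, and if f is continuously differentiable then g is continuously differentiable. -/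
/-!
Fix `x` and write `F = f (x, ·)`. If `|w i|` is the largest coordinate of `w` in absolute value, row
`i` of the dominance hypothesis gives `d * |w i| ≤ |(F' w) i|`. This shows that every derivative of
`F` is invertible, and, through the mean value theorem for the `i`-th component of `F` on the
segment from `v` to `u`, that `‖u - v‖ ≤ (m / d) * ‖F u - F v‖`
(`DiagDominant.norm_sub_le`). So `F` is injective. It is an open map by the inverse function
theorem, and a proper map, hence closed, by the lower bound; its range is therefore everything
(`DiagDominant.surjective`). This yields the zero `g x` and its uniqueness.

Continuity of `g` follows from `‖g y - g x‖ ≤ (m / d) * ‖f (y, g x)‖`, where the right side tends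
to `0` as `y → x`. If `f` is `C¹`, the local implicit function at `(x, g x)` is `C¹` and agrees with `g` near
`x` by uniqueness of zeros.
-/

open scoped BigOperators

/-- Strict row diagonal dominance with margin `d` of the matrix of a linear endomorphism `L` in the
standard basis. -/
def DiagDominant {m : ℕ} (d : ℝ) (L : EuclideanSpace ℝ (Fin m) →L[ℝ] EuclideanSpace ℝ (Fin m)) :
    Prop :=
  ∀ i : Fin m, d ≤ |L (EuclideanSpace.single i 1) i| -
    ∑ j ∈ Finset.univ.erase i, |L (EuclideanSpace.single j 1) i|

namespace DiagDominant

variable {m : ℕ} {d : ℝ}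

theorem le_abs_apply {L : EuclideanSpace ℝ (Fin m) →L[ℝ] EuclideanSpace ℝ (Fin m)}
    (hL : DiagDominant d L) (w : EuclideanSpace ℝ (Fin m)) (i : Fin m)
    (hi : ∀ j, |w j| ≤ |w i|) : d * |w i| ≤ |L w i| := by
  have hw : w = ∑ j, w j • EuclideanSpace.single j (1 : ℝ) := by
    ext k
    simp [Finset.sum_apply, Pi.single_apply]
  have hLw : L w i = ∑ j, w j * L (EuclideanSpace.single j 1) i := by
    conv_lhs => rw [hw]
    simp [map_sum]
  rw [← Finset.add_sum_erase _ _ (Finset.mem_univ i)] at hLw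
  have hrest : |∑ j ∈ Finset.univ.erase i, w j * L (EuclideanSpace.single j 1) i| ≤
      |w i| * ∑ j ∈ Finset.univ.erase i, |L (EuclideanSpace.single j 1) i| := by
    refine (Finset.abs_sum_le_sum_abs _ _).trans ?_
    rw [Finset.mul_sum]
    refine Finset.sum_le_sum fun j _ => ?_
    rw [abs_mul]
    exact mul_le_mul_of_nonneg_right (hi j) (abs_nonneg _)
  have hdiag := mul_le_mul_of_nonneg_left (hL i) (abs_nonneg (w i))
  have htri := abs_sub_abs_le_abs_add (w i * L (EuclideanSpace.single i 1) i)
    (∑ j ∈ Finset.univ.erase i, w j * L (EuclideanSpace.single j 1) i)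
  rw [← hLw, abs_mul] at htri
  linarith

theorem exists_max_coord (hm : 1 ≤ m) (w : EuclideanSpace ℝ (Fin m)) :
    ∃ i, (∀ j, |w j| ≤ |w i|) ∧ ‖w‖ ≤ m * |w i| := by
  have : Nonempty (Fin m) := ⟨⟨0, hm⟩⟩
  obtain ⟨i, hi⟩ := Finite.exists_max fun j => |w j|
  refine ⟨i, hi, ?_⟩
  have hw : w = ∑ j, w j • EuclideanSpace.single j (1 : ℝ) := by
    ext k
    simp [Finset.sum_apply, Pi.single_apply]
  calc ‖w‖ = ‖∑ j, w j • EuclideanSpace.single j (1 : ℝ)‖ := by rw [← hw]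
    _ ≤ ∑ j, |w j| := (norm_sum_le _ _).trans_eq (by simp [norm_smul])
    _ ≤ ∑ _j : Fin m, |w i| := Finset.sum_le_sum fun j _ => hi j
    _ = m * |w i| := by simp

theorem isInvertible (hm : 1 ≤ m) (hd : 0 < d)
    {L : EuclideanSpace ℝ (Fin m) →L[ℝ] EuclideanSpace ℝ (Fin m)}
    (hL : DiagDominant d L) : L.IsInvertible := by
  have hinj : Function.Injective (L : EuclideanSpace ℝ (Fin m) →ₗ[ℝ] EuclideanSpace ℝ (Fin m)) := by
    refine (injective_iff_map_eq_zero _).2 fun w hw => ?_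
    obtain ⟨i, hi, hnorm⟩ := exists_max_coord hm w
    have hle := hL.le_abs_apply w i hi
    have hw' : L w = 0 := hw
    rw [hw'] at hle
    have hz : |w i| = 0 := by
      have := abs_nonneg (w i)
      simp only [PiLp.zero_apply, abs_zero] at hle
      nlinarith
    rw [hz, mul_zero] at hnorm
    exact norm_le_zero_iff.1 hnorm
  refine ⟨(LinearEquiv.ofInjectiveEndo _ hinj).toContinuousLinearEquiv, ?_⟩
  ext1 w
  rfl

/-- A differentiable map with uniformly row-dominant derivative expands distances by at least
`d / m`. -/
theorem norm_sub_le (hm : 1 ≤ m) (hd : 0 < d)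
    {F : EuclideanSpace ℝ (Fin m) → EuclideanSpace ℝ (Fin m)} (hF : Differentiable ℝ F)
    (hdom : ∀ u, DiagDominant d (fderiv ℝ F u)) (u v : EuclideanSpace ℝ (Fin m)) :
    ‖u - v‖ ≤ m / d * ‖F u - F v‖ := by
  obtain ⟨i, hi, hnorm⟩ := exists_max_coord hm (u - v)
  have hFi : ∀ z, HasFDerivAt (fun z => F z i)
      ((EuclideanSpace.proj i : EuclideanSpace ℝ (Fin m) →L[ℝ] ℝ) ∘L fderiv ℝ F z) z := fun z =>
    (EuclideanSpace.proj i : EuclideanSpace ℝ (Fin m) →L[ℝ] ℝ).hasFDerivAt.comp z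
      (hF z).hasFDerivAt
  obtain ⟨c, -, hc⟩ := domain_mvt (fun z _ => (hFi z).hasFDerivWithinAt) convex_univ
    (Set.mem_univ v) (Set.mem_univ u)
  have hle := (hdom c).le_abs_apply (u - v) i hi
  have hc' : fderiv ℝ F c (u - v) i = (F u - F v) i := by
    simpa using hc.symm
  rw [hc'] at hle
  have hcoord : |(F u - F v) i| ≤ ‖F u - F v‖ := by
    simpa using PiLp.norm_apply_le (F u - F v) i
  have hi' : |(u - v) i| ≤ ‖F u - F v‖ / d := by
    rw [le_div_iff₀ hd]
    linarith
  calc ‖u - v‖ ≤ m * |(u - v) i| := hnorm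
    _ ≤ m * (‖F u - F v‖ / d) := by gcongr
    _ = m / d * ‖F u - F v‖ := by ring

/-- The range is open by the inverse function theorem and closed by properness. -/
theorem surjective (hm : 1 ≤ m) (hd : 0 < d)
    {F : EuclideanSpace ℝ (Fin m) → EuclideanSpace ℝ (Fin m)} (hF : ContDiff ℝ 1 F)
    (hdom : ∀ u, DiagDominant d (fderiv ℝ F u)) : Function.Surjective F := by
  have hopen : IsOpenMap F := by
    choose e he using fun u => (hdom u).isInvertible hm hd
    refine isOpenMap_of_hasStrictFDerivAt_equiv (f' := e) fun u => ?_
    rw [he u]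
    exact hF.contDiffAt.hasStrictFDerivAt one_ne_zero
  have hanti : AntilipschitzWith (Real.toNNReal (m / d)) F := by
    refine AntilipschitzWith.of_le_mul_dist fun u v => ?_
    rw [dist_eq_norm, dist_eq_norm, Real.coe_toNNReal _ (by positivity)]
    exact norm_sub_le hm hd (hF.differentiable one_ne_zero) hdom u v
  have hproper : IsProperMap F := by
    refine isProperMap_iff_tendsto_cocompact.2 ⟨hF.continuous, ?_⟩
    simpa only [Metric.cobounded_eq_cocompact] using hanti.tendsto_cobounded
  exact Set.range_eq_univ.1 (IsClopen.eq_univ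
    ⟨hproper.isClosedMap.isClosed_range, hopen.isOpen_range⟩ (Set.range_nonempty F))

end DiagDominant

/-- global implicit function theorem under uniform strict row
diagonal dominance of the Jacobian in the `u`-variables. -/
theorem stmt_15 (n m : ℕ) (hn : 1 ≤ n) (hm : 1 ≤ m)
    (f : EuclideanSpace ℝ (Fin n) × EuclideanSpace ℝ (Fin m) → EuclideanSpace ℝ (Fin m))
    (hcont : Continuous f)
    (hdiff : ∀ x : EuclideanSpace ℝ (Fin n), ContDiff ℝ 1 (fun u => f (x, u)))
    (d : ℝ) (hd : 0 < d)
    (hdom : ∀ (x : EuclideanSpace ℝ (Fin n)) (u : EuclideanSpace ℝ (Fin m)) (i : Fin m),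
      d ≤ |fderiv ℝ (fun u => f (x, u)) u (EuclideanSpace.single i 1) i| -
        ∑ j ∈ Finset.univ.erase i,
          |fderiv ℝ (fun u => f (x, u)) u (EuclideanSpace.single j 1) i|) :
    ∃ g : EuclideanSpace ℝ (Fin n) → EuclideanSpace ℝ (Fin m),
      (∀ x, f (x, g x) = 0) ∧
      Continuous g ∧
      (ContDiff ℝ 1 f → ContDiff ℝ 1 g) ∧
      ∀ g' : EuclideanSpace ℝ (Fin n) → EuclideanSpace ℝ (Fin m),
        (∀ x, f (x, g' x) = 0) → g' = g := by
  have hdom' : ∀ x u, DiagDominant d (fderiv ℝ (fun u => f (x, u)) u) := hdom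
  have hbound : ∀ x u v, ‖u - v‖ ≤ m / d * ‖f (x, u) - f (x, v)‖ := fun x =>
    DiagDominant.norm_sub_le hm hd ((hdiff x).differentiable one_ne_zero) (hdom' x)
  choose g hg using fun x => DiagDominant.surjective hm hd (hdiff x) (hdom' x) 0
  beta_reduce at hg
  have huniq : ∀ x u, f (x, u) = 0 → u = g x := fun x u hu => by
    have h := hbound x u (g x)
    rw [hu, hg x, sub_zero, norm_zero, mul_zero] at h
    exact sub_eq_zero.1 (norm_le_zero_iff.1 h)
  refine ⟨g, hg, ?_, ?_, fun g' hg' => funext fun x => huniq x _ (hg' x)⟩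
  · refine continuous_iff_continuousAt.2 fun x => tendsto_iff_norm_sub_tendsto_zero.2 ?_
    have hlim : Filter.Tendsto (fun y => m / d * ‖f (y, g x)‖) (nhds x) (nhds 0) := by
      have hc : Continuous fun y => m / d * ‖f (y, g x)‖ := by fun_prop
      simpa [hg x] using hc.tendsto x
    refine squeeze_zero (fun _ => norm_nonneg _) (fun y => ?_) hlim
    simpa [hg y] using hbound y (g y) (g x)
  · intro hf
    refine contDiff_iff_contDiffAt.2 fun x => ?_
    have hfx : ContDiffAt ℝ 1 f (x, g x) := hf.contDiffAt
    have hpartial : fderiv ℝ f (x, g x) ∘L .inr ℝ _ _ = fderiv ℝ (fun u => f (x, u)) (g x) :=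
      ((hfx.differentiableAt one_ne_zero).hasFDerivAt.comp (g x)
        (hasFDerivAt_prodMk_right x (g x))).fderiv.symm
    have hinv : (fderiv ℝ f (x, g x) ∘L .inr ℝ _ _).IsInvertible := by
      rw [hpartial]
      exact (hdom' x (g x)).isInvertible hm hd
    refine (hfx.contDiffAt_implicitFunction one_ne_zero hinv).congr_of_eventuallyEq ?_
    filter_upwards [hfx.eventually_apply_implicitFunction one_ne_zero hinv] with y hy
    exact (huniq y _ (hy.trans (hg x))).symm
end
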